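/- For the weighted directed cycle digraph, suppose w i > 0 for every i ≠ 0 and w 0 ∈ ℝ satisfies 1 + w 0 · Σ_{i ≠ 0} (1 / w i) ≠ 0. Then the (n−1)×(n−1) reduced matrix Eτᵀ * W * Rᵀ is invertible, and the (0,0) entry of the n×n matrix Rᵀ * (Eτᵀ * W * Rᵀ)⁻¹ * Eτᵀ equals (Σ_{i ≠ 0} 1 / w i) / (1 + w 0 · Σ_{i ≠ 0} 1 / w i). (This is the value |M(0)| of the transfer function of the uncertain cyclic-pursuit loop at the phase-crossover frequency ω = 0.) -/

import Mathlib

open Matrix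

lemma aux_z (k : ℕ) (w z : Fin (k+2) → ℝ) (hw : ∀ i : Fin (k+1), 0 < w i.succ) (t σ : ℝ)
    (hσ : σ = ∑ i : Fin (k+1), 1 / w i.succ) (hz : ∑ i, z i = 0)
    (h : ∀ i : Fin (k+1), w i.castSucc * z i.castSucc - w i.succ * z i.succ
      = if i = 0 then t else 0) :
    ∃ c : ℝ, (∀ i : Fin (k+1), z i.succ = c / w i.succ) ∧ c * (1 + w 0 * σ) = -t ∧ z 0 = -c * σ := by
  have hc : ∀ i : Fin (k+1), w i.succ * z i.succ = w 1 * z 1 := by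
    intro i
    induction i using Fin.induction with
    | zero => rfl
    | succ j ih =>
      have := h j.succ
      rw [if_neg (Fin.succ_ne_zero j), ← Fin.succ_castSucc] at this
      linarith
  have h1 : ∀ i : Fin (k+1), z i.succ = (w 1 * z 1) / w i.succ := by
    intro i
    rw [eq_div_iff (hw i).ne', ← hc i]; ring
  have h2 : z 0 = -(w 1 * z 1) * σ := by
    rw [Fin.sum_univ_succ] at hz
    have : ∑ i : Fin (k+1), z i.succ = (w 1 * z 1) * σ := by
      rw [hσ, Finset.mul_sum]
      refine Finset.sum_congr rfl fun i _ => ?_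
      rw [h1 i]; ring
    linarith
  refine ⟨w 1 * z 1, h1, ?_, h2⟩
  have h3 := h 0
  rw [if_pos rfl] at h3
  have h4 : w 0 * z 0 - w 1 * z 1 = t := h3
  rw [h2] at h4
  linarith

lemma isUnit_of_inj {m : ℕ} (M : Matrix (Fin m) (Fin m) ℝ) (h : ∀ y, M *ᵥ y = 0 → y = 0) :
    IsUnit M := by
  rw [← Matrix.mulVec_injective_iff_isUnit]
  intro a b hab
  have := h (a - b) (by rw [Matrix.mulVec_sub]; exact sub_eq_zero.2 hab)
  exact sub_eq_zero.1 this

lemma aux_Et {k : ℕ} (Et : Matrix (Fin (k+2)) (Fin (k+1)) ℝ)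
    (hEt : ∀ v j, Et v j = if v = j.castSucc then 1 else if v = j.succ then -1 else 0)
    (x : Fin (k+2) → ℝ) (i : Fin (k+1)) :
    (Etᵀ *ᵥ x) i = x i.castSucc - x i.succ := by
  have : ∀ v, Et v i * x v = (if v = i.castSucc then x v else 0) - (if v = i.succ then x v else 0) := by
    intro v
    rw [hEt]
    have : i.castSucc ≠ i.succ := (Fin.castSucc_lt_succ).ne
    split_ifs <;> simp_all
  simp only [Matrix.mulVec, dotProduct, Matrix.transpose_apply, this, Finset.sum_sub_distrib,
    Finset.sum_ite_eq', Finset.mem_univ, if_true]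

lemma aux_T {k : ℕ} (Et : Matrix (Fin (k+2)) (Fin (k+1)) ℝ)
    (hEt : ∀ v j, Et v j = if v = j.castSucc then 1 else if v = j.succ then -1 else 0)
    (Ec : Matrix (Fin (k+2)) (Fin 1) ℝ)
    (hEc : ∀ v j, Ec v j = if v = Fin.last _ then 1 else if v = 0 then -1 else 0) 
    (T : Matrix (Fin (k+1)) (Fin 1) ℝ) (hT : T = (Etᵀ * Et)⁻¹ * Etᵀ * Ec) (i) (j) :
    T i j = -1 := by
  have hu : IsUnit (Etᵀ * Et) := by
    apply isUnit_of_inj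
    intro y hy
    have hy2 : Et *ᵥ y = 0 := by
      rw [← Matrix.mulVec_mulVec] at hy
      have : (Et *ᵥ y) ⬝ᵥ (Et *ᵥ y) = 0 := by
        rw [Matrix.dotProduct_mulVec, ← Matrix.mulVec_transpose, hy, zero_dotProduct]
      exact dotProduct_self_eq_zero.1 this
    have hpart : ∀ v : Fin (k+2), ∑ j : Fin (k+1), (if v = j.castSucc then y j else 0)
        = ∑ j : Fin (k+1), (if v = j.succ then y j else 0) := by
      intro v
      have := congrFun hy2 v
      rw [← sub_eq_zero, ← Finset.sum_sub_distrib]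
      refine Eq.trans ?_ this
      simp only [Matrix.mulVec, dotProduct]
      clear this
      refine Finset.sum_congr rfl fun j _ => ?_
      rw [hEt]
      have : j.castSucc ≠ j.succ := (Fin.castSucc_lt_succ).ne
      split_ifs <;> simp_all
    funext i
    induction i using Fin.induction with
    | zero =>
      have := hpart (Fin.castSucc 0)
      simp only [Fin.castSucc_inj] at this
      simpa [(Fin.succ_ne_zero _).symm] using this
    | succ j ih =>
      have := hpart (Fin.castSucc j.succ)
      simp only [← Fin.succ_castSucc, Fin.succ_inj] at this
      simp only [Fin.succ_castSucc, Fin.castSucc_inj] at this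
      simpa [ih] using this
  have hE : Ec = Et * (Matrix.of fun _ _ => -1 : Matrix (Fin (k+1)) (Fin 1) ℝ) := by
    ext v j
    rw [Matrix.mul_apply, hEc]
    simp only [Matrix.of_apply]
    have : ∀ j : Fin (k+1), Et v j * (-1) = (if v = j.succ then 1 else 0) - (if v = j.castSucc then 1 else 0) := by
      intro j
      rw [hEt]
      have : j.castSucc ≠ j.succ := (Fin.castSucc_lt_succ).ne
      split_ifs <;> simp_all
    simp only [this, Finset.sum_sub_distrib]
    have e1 : ∑ j : Fin (k+1), (if v = j.succ then (1:ℝ) else 0) = if v = 0 then 0 else 1 := by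
      refine Fin.cases ?_ (fun a => ?_) v
      · simp [(Fin.succ_ne_zero _).symm]
      · simp
    have e2 : ∑ j : Fin (k+1), (if v = j.castSucc then (1:ℝ) else 0) = if v = Fin.last _ then 0 else 1 := by
      refine Fin.lastCases ?_ (fun a => ?_) v
      · simp [(Fin.castSucc_ne_last _).symm]
      · simp
    rw [e1, e2]
    have : Fin.last (k+1) ≠ 0 := Fin.last_pos.ne'
    split_ifs <;> simp_all
  rw [hT, hE, Matrix.mul_assoc, ← Matrix.mul_assoc Etᵀ, Matrix.nonsing_inv_mul_cancel_left _ _ ((Matrix.isUnit_iff_isUnit_det _).1 hu)]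
  rfl

lemma aux_main (k : ℕ) (w : Fin (k+2) → ℝ) (hw : ∀ i : Fin (k+1), 0 < w i.succ) (σ : ℝ)
    (hσ : σ = ∑ i : Fin (k+1), 1 / w i.succ) (h0 : 1 + w 0 * σ ≠ 0)
    (Et : Matrix (Fin (k+2)) (Fin (k+1)) ℝ)
    (hEt : ∀ v j, Et v j = if v = j.castSucc then 1 else if v = j.succ then -1 else 0)
    (R : Matrix (Fin (k+1)) (Fin (k+2)) ℝ)
    (hR : ∀ i (j : Fin (k+1)), R i j.castSucc = if i = j then 1 else 0)
    (hR' : ∀ i, R i (Fin.last _) = -1) :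
    IsUnit (Etᵀ * diagonal w * Rᵀ) ∧
    (Rᵀ * (Etᵀ * diagonal w * Rᵀ)⁻¹ * Etᵀ) 0 0 = σ / (1 + w 0 * σ) := by
  have hz1 : ∀ y (j : Fin (k+1)), (Rᵀ *ᵥ y) j.castSucc = y j := by
    intro y j
    simp [Matrix.mulVec, dotProduct, hR]
  have hz : ∀ y, ∑ j, (Rᵀ *ᵥ y) j = 0 := by
    intro y
    rw [Fin.sum_univ_castSucc]
    simp only [hz1]
    simp [Matrix.mulVec, dotProduct, hR']
  have hM : ∀ y i, ((Etᵀ * diagonal w * Rᵀ) *ᵥ y) i = w i.castSucc * (Rᵀ *ᵥ y) i.castSucc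
      - w i.succ * (Rᵀ *ᵥ y) i.succ := by
    intro y i
    rw [← Matrix.mulVec_mulVec, ← Matrix.mulVec_mulVec, aux_Et Et hEt, Matrix.mulVec_diagonal,
      Matrix.mulVec_diagonal]
  have hu : IsUnit (Etᵀ * diagonal w * Rᵀ) := by
    apply isUnit_of_inj
    intro y hy
    obtain ⟨c, h1, h2, h3⟩ := aux_z k w (Rᵀ *ᵥ y) hw 0 σ hσ (hz y) (by
      intro i
      rw [← hM, hy]; simp)
    have hc : c = 0 := by
      rw [neg_zero] at h2
      exact (mul_eq_zero.1 h2).resolve_right h0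
    have hzz : ∀ j, (Rᵀ *ᵥ y) j = 0 := by
      intro j
      refine Fin.cases ?_ (fun a => ?_) j
      · rw [h3, hc]; simp
      · rw [h1, hc]; simp
    funext j
    exact (hz1 y j).symm.trans (hzz _)
  refine ⟨hu, ?_⟩
  set M := Etᵀ * diagonal w * Rᵀ with hMdef
  set y := M⁻¹ *ᵥ (Etᵀ *ᵥ Pi.single 0 1) with hy
  have e : (Rᵀ * M⁻¹ * Etᵀ) 0 0 = (Rᵀ *ᵥ y) 0 := by
    rw [hy, Matrix.mulVec_mulVec, Matrix.mulVec_mulVec, Matrix.mulVec_single_one]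
    rfl
  have hMy : M *ᵥ y = Etᵀ *ᵥ Pi.single 0 1 := by
    rw [hy, Matrix.mulVec_mulVec, Matrix.mul_nonsing_inv _ ((Matrix.isUnit_iff_isUnit_det _).1 hu),
      Matrix.one_mulVec]
  obtain ⟨c, h1, h2, h3⟩ := aux_z k w (Rᵀ *ᵥ y) hw 1 σ hσ (hz y) (by
      intro i
      rw [← hM, hMy, aux_Et Et hEt]
      simp [Pi.single_apply, Fin.succ_ne_zero])
  rw [e, h3, eq_div_iff h0]
  linear_combination (-σ) * h2

/-- For the weighted directed cycle digraph with `w i > 0` for `i ≠ 0` and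
`1 + w 0 · Σ_{i ≠ 0} 1/(w i) ≠ 0`, the reduced matrix `Eτᵀ * W * Rᵀ` is invertible and
the `(0,0)` entry of `Rᵀ * (Eτᵀ * W * Rᵀ)⁻¹ * Eτᵀ` equals
`(Σ_{i ≠ 0} 1/(w i)) / (1 + w 0 · Σ_{i ≠ 0} 1/(w i))`. -/
theorem cycle_transfer_function_value_at_zero
    (n : ℕ) (hn : 2 ≤ n) (w : Fin n → ℝ)
    (hw : ∀ i : Fin n, i ≠ ⟨0, by omega⟩ → 0 < w i)
    (σ : ℝ) (hσ : σ = ∑ i ∈ Finset.univ.filter (fun i : Fin n => i ≠ ⟨0, by omega⟩), 1 / w i)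
    (h0 : 1 + w ⟨0, by omega⟩ * σ ≠ 0)
    (E : Matrix (Fin n) (Fin n) ℝ)
    (hE : ∀ v i, E v i = if v = i then 1 else if v = i + ⟨1, by omega⟩ then -1 else 0)
    (A : Matrix (Fin n) (Fin n) ℝ) (hA : A = 1)
    (W : Matrix (Fin n) (Fin n) ℝ) (hW : W = Matrix.diagonal w)
    (Eτ : Matrix (Fin n) (Fin (n - 1)) ℝ)
    (hEτ : Eτ = E.submatrix id
      (fun i : Fin (n - 1) => ⟨i.val, lt_of_lt_of_le i.2 (Nat.sub_le n 1)⟩))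
    (Ec : Matrix (Fin n) (Fin 1) ℝ)
    (hEc : Ec = E.submatrix id (fun _ => ⟨n - 1, by omega⟩))
    (Tτ : Matrix (Fin (n - 1)) (Fin 1) ℝ)
    (hTτ : Tτ = (Eτᵀ * Eτ)⁻¹ * Eτᵀ * Ec)
    (R : Matrix (Fin (n - 1)) (Fin n) ℝ)
    (hR : ∀ (i : Fin (n - 1)) (j : Fin n), R i j =
      if h : j.val < n - 1 then (if i.val = j.val then 1 else 0) else Tτ i 0) :
    IsUnit (Eτᵀ * W * Rᵀ) ∧
    (Rᵀ * (Eτᵀ * W * Rᵀ)⁻¹ * Eτᵀ) ⟨0, by omega⟩ ⟨0, by omega⟩ =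
      σ / (1 + w ⟨0, by omega⟩ * σ) := by
  obtain ⟨k, rfl⟩ : ∃ k, n = k + 2 := ⟨n - 2, by omega⟩
  have hEt : ∀ (v : Fin (k+2)) (j : Fin (k+1)),
      Eτ v j = if v = j.castSucc then 1 else if v = j.succ then -1 else 0 := by
    intro v j
    have hj : (j.castSucc + ⟨1, by omega⟩ : Fin (k+2)) = j.succ := by
      ext
      rw [Fin.val_add]
      simp only [Fin.val_castSucc, Fin.val_succ]
      exact Nat.mod_eq_of_lt (by omega)
    rw [← hj, hEτ]
    exact hE v j.castSucc
  have hEc' : ∀ (v : Fin (k+2)) (j : Fin 1),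
      Ec v j = if v = Fin.last _ then 1 else if v = 0 then -1 else 0 := by
    intro v j
    have hj : (Fin.last (k+1) + ⟨1, by omega⟩ : Fin (k+2)) = 0 := by
      ext
      rw [Fin.val_add]
      simp
    rw [← hj, hEc]
    exact hE v (Fin.last _)
  have hT := aux_T (k := k) Eτ hEt Ec hEc' Tτ hTτ
  subst hW
  refine aux_main k w (fun i => hw _ (Fin.succ_ne_zero i)) σ ?_ h0 Eτ hEt R ?_ ?_
  · rw [hσ, Finset.sum_filter, Fin.sum_univ_succ]
    rw [if_neg (by simp), zero_add]
    refine Finset.sum_congr rfl fun i _ => ?_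
    exact if_pos (Fin.succ_ne_zero i)
  · intro i j
    refine (hR i j.castSucc).trans ?_
    rw [dif_pos (by have := j.2; simp; omega)]
    simp [Fin.ext_iff]
  · intro i
    refine (hR i (Fin.last _)).trans ?_
    rw [dif_neg (by simp)]
    exact hT i 0
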